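/- Let G be a 6-vertex-critical (P6, diamond)-free graph with clique number 5, let A = {a1,...,a5} be a clique of size 5 in G, and for i = 1,...,5 let B_i be the set of vertices outside A adjacent to a_i. Then for each i, the subgraph of G induced by B_i contains no clique of size 4, and the subgraph of G induced by B_1 ∪ ... ∪ B_5 contains no induced cycle of length 5. -/

import Mathlib

/-!
The proof uses criticality only through three local facts: every vertex has at least five
neighbours, no vertex has its neighbourhood contained in that of another vertex, and no vertex has
a clique as neighbourhood (the last one because there is no `K₆`). On the other side,
diamond-freeness and `ω = 5` make every vertex outside a `K₅` adjacent to at most one of its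
vertices. These facts are collected in `Local`.

*No `K₄` in `B_i`.* Such a `K₄` gives two copies `a`, `k` of `K₅` sharing one vertex `a 0 = k 0`.
If a vertex is adjacent to `a i` and `k j` with `i, j ≠ 0`, then induced `P₆`s force every
outside neighbour of any other `a i'` to be adjacent to `k j`, and vice versa, which is
contradictory (`Bowtie.no_mixed`). So the outside neighbours of the two sides are distinct, and
they are anticomplete to each other (`Bowtie.anticomplete`). An outside neighbour `x` of `a 1` then
cannot have a neighbour outside the closed neighbourhood of `a 1`: a `P₆` running from `x` through
`a 0` to the far side appears. Hence the neighbourhood of `x` is a clique, which is impossible.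

*No `C₅` in the union of the `B_i`.* Label each vertex of the five-cycle by the index `i` of its
`B_i`. A label used once yields a `P₆` ending in two vertices of `A`, and three consecutive equal
labels yield a diamond, so the labels follow the pattern `p, q, w ∈ B_i`, `x, y ∈ B_j` on the cycle
`p x w y q`, up to rotation (`labels_pattern`). For a third index `m`, a vertex `z ∈ B_m` meets the
cycle in exactly `{p, w, y}` or `{q, w, x}` (`third_vertex`), and two such vertices for two
different indices always create a diamond or a `P₆`.
-/

open SimpleGraph

/-- The diamond graph: `K₄` minus an edge. -/
def diamondGraph : SimpleGraph (Fin 4) :=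
  SimpleGraph.fromRel (fun a b =>
    (a, b) ∈ [((0 : Fin 4), (1 : Fin 4)), (0, 2), (0, 3), (1, 2), (1, 3)])

/-- `G` has no induced subgraph isomorphic to `H`. -/
def InducedFree {W V : Type*} (H : SimpleGraph W) (G : SimpleGraph V) : Prop :=
  ¬ Nonempty (H ↪g G)

/-- `G` is (P₆, diamond)-free: it contains no induced subgraph isomorphic to the
path on six vertices or to the diamond. -/
def P6DiamondFree {V : Type*} (G : SimpleGraph V) : Prop :=
  InducedFree (SimpleGraph.pathGraph 6) G ∧ InducedFree diamondGraph G

/-- `G` is `k`-vertex-critical: `χ(G) = k` and every proper induced subgraph has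
chromatic number less than `k`. -/
def IsVertexCritical {V : Type*} (k : ℕ) (G : SimpleGraph V) : Prop :=
  G.chromaticNumber = (k : ℕ∞) ∧
    ∀ S : Set V, S ≠ Set.univ → (G.induce S).chromaticNumber < (k : ℕ∞)

/-- `B_i`: the set of vertices outside the clique `A = {a 0, …}` adjacent to `a i`. -/
def Bset {V : Type*} {k : ℕ} (G : SimpleGraph V) (a : Fin k → V) (i : Fin k) : Set V :=
  {x | x ∉ Set.range a ∧ G.Adj x (a i)}

/-- The cycle on five vertices. -/
def C5graph : SimpleGraph (Fin 5) :=
  SimpleGraph.fromRel (fun a b => b = a + 1)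

/-- The local consequences of the hypotheses on `G` on which the argument rests. A five-clique is
encoded as a map `a : Fin 5 → V` with pairwise adjacent values. -/
structure Local {V : Type*} (G : SimpleGraph V) : Prop where
  p6 : ∀ v₀ v₁ v₂ v₃ v₄ v₅ : V,
    G.Adj v₀ v₁ → G.Adj v₁ v₂ → G.Adj v₂ v₃ → G.Adj v₃ v₄ → G.Adj v₄ v₅ →
    ¬ G.Adj v₀ v₂ → ¬ G.Adj v₀ v₃ → ¬ G.Adj v₀ v₄ → ¬ G.Adj v₀ v₅ →
    ¬ G.Adj v₁ v₃ → ¬ G.Adj v₁ v₄ → ¬ G.Adj v₁ v₅ →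
    ¬ G.Adj v₂ v₄ → ¬ G.Adj v₂ v₅ → ¬ G.Adj v₃ v₅ → False
  diamond : ∀ u v x y : V, G.Adj u v → G.Adj u x → G.Adj u y → G.Adj v x → G.Adj v y →
    x ≠ y → G.Adj x y
  attach : ∀ a : Fin 5 → V, (∀ i j, i ≠ j → G.Adj (a i) (a j)) → ∀ x, x ∉ Set.range a →
    ∀ i j, G.Adj x (a i) → G.Adj x (a j) → i = j
  nbr : ∀ a : Fin 5 → V, (∀ i j, i ≠ j → G.Adj (a i) (a j)) → ∀ i,
    ∃ x, x ∉ Set.range a ∧ G.Adj x (a i)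
  incomp : ∀ x y, x ≠ y → ∃ w, G.Adj x w ∧ ¬ G.Adj y w
  notClique : ∀ x, ∃ p q, G.Adj x p ∧ G.Adj x q ∧ p ≠ q ∧ ¬ G.Adj p q

/-! ### Consequences of the hypotheses -/

lemma p6_of_inducedFree {V : Type*} {G : SimpleGraph V}
    (hG : InducedFree (SimpleGraph.pathGraph 6) G) (v₀ v₁ v₂ v₃ v₄ v₅ : V)
    (h01 : G.Adj v₀ v₁) (h12 : G.Adj v₁ v₂) (h23 : G.Adj v₂ v₃) (h34 : G.Adj v₃ v₄)
    (h45 : G.Adj v₄ v₅) (h02 : ¬ G.Adj v₀ v₂) (h03 : ¬ G.Adj v₀ v₃) (h04 : ¬ G.Adj v₀ v₄)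
    (h05 : ¬ G.Adj v₀ v₅) (h13 : ¬ G.Adj v₁ v₃) (h14 : ¬ G.Adj v₁ v₄) (h15 : ¬ G.Adj v₁ v₅)
    (h24 : ¬ G.Adj v₂ v₄) (h25 : ¬ G.Adj v₂ v₅) (h35 : ¬ G.Adj v₃ v₅) : False := by
  have key : ∀ i j : Fin 6, G.Adj (![v₀, v₁, v₂, v₃, v₄, v₅] i) (![v₀, v₁, v₂, v₃, v₄, v₅] j) ↔
      (i.val + 1 = j.val ∨ j.val + 1 = i.val) := by
    intro i j
    fin_cases i <;> fin_cases j <;> simp [*, G.adj_comm]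
  refine hG ⟨⟨⟨![v₀, v₁, v₂, v₃, v₄, v₅], ?_⟩, ?_⟩⟩
  · -- distinct vertices of a six-vertex path have distinct neighbourhoods
    intro i j hij
    have h1 : ∀ l : Fin 6, (i.val + 1 = l.val ∨ l.val + 1 = i.val) ↔
        (j.val + 1 = l.val ∨ l.val + 1 = j.val) := by
      intro l
      rw [← key, ← key, hij]
    clear hij
    revert i j
    decide +kernel
  · intro i j
    change G.Adj (![v₀, v₁, v₂, v₃, v₄, v₅] i) (![v₀, v₁, v₂, v₃, v₄, v₅] j) ↔ _
    rw [key, SimpleGraph.pathGraph_adj]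

lemma diamond_of_inducedFree {V : Type*} {G : SimpleGraph V}
    (hG : InducedFree diamondGraph G) (u v x y : V) (huv : G.Adj u v) (hux : G.Adj u x)
    (huy : G.Adj u y) (hvx : G.Adj v x) (hvy : G.Adj v y) (hxy : x ≠ y) : G.Adj x y := by
  by_contra hn
  refine hG ⟨⟨⟨![u, v, x, y], ?_⟩, ?_⟩⟩
  · have := huv.ne
    have := hux.ne
    have := huy.ne
    have := hvx.ne
    have := hvy.ne
    intro i j hij
    fin_cases i <;> fin_cases j <;> simp_all
  · intro i j
    have h := G.adj_comm
    change G.Adj (![u, v, x, y] i) (![u, v, x, y] j) ↔ _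
    fin_cases i <;> fin_cases j <;> simp [diamondGraph] <;> grind

/-- A six-vertex-critical graph is not `5`-colourable, but becomes so on deleting any vertex `v`. The
value at `v` of the second colouring is arbitrary. -/
lemma colouring_of_critical {V : Type*} {G : SimpleGraph V} (hcrit : IsVertexCritical 6 G) :
    (∀ c : V → Fin 5, ∃ u w, G.Adj u w ∧ c u = c w) ∧
      ∀ v, ∃ c : V → Fin 5, ∀ u w, u ≠ v → w ≠ v → G.Adj u w → c u ≠ c w := by
  obtain ⟨h6, hsub⟩ := hcrit
  constructor
  · intro c
    by_contra! hc
    have hcol : G.Colorable 5 := ⟨Coloring.mk c (fun {u w} h => hc u w h)⟩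
    have := hcol.chromaticNumber_le
    rw [h6] at this
    exact absurd this (by decide)
  · intro v
    have hlt := hsub {v}ᶜ (by
      intro h
      have : v ∈ ({v}ᶜ : Set V) := h ▸ Set.mem_univ v
      simp at this)
    have hle : (G.induce ({v}ᶜ : Set V)).chromaticNumber ≤ (5 : ℕ) := by
      have h56 : ((6 : ℕ) : ℕ∞) = ((5 : ℕ) : ℕ∞) + 1 := by norm_num
      rw [h56] at hlt
      exact Order.le_of_lt_add_one hlt
    obtain ⟨c⟩ := chromaticNumber_le_iff_colorable.mp hle
    classical
    refine ⟨fun u => if h : u = v then 0 else c ⟨u, by simpa using h⟩, ?_⟩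
    intro u w hu hw huw
    simp only [hu, hw, dif_neg, not_false_eq_true]
    exact c.valid (by simpa using huw)

lemma degree_of_critical {V : Type*} {G : SimpleGraph V} (hcrit : IsVertexCritical 6 G) (v : V)
    (s : Finset V) (hs : ∀ w, G.Adj v w → w ∈ s) : 5 ≤ s.card := by
  classical
  obtain ⟨hno, hyes⟩ := colouring_of_critical hcrit
  obtain ⟨c, hc⟩ := hyes v
  by_contra! hcard
  -- fewer than five vertices leave a colour free for `v`
  obtain ⟨k, hk⟩ : ∃ k : Fin 5, k ∉ s.image c := by
    by_contra! hall
    have h1 : (Finset.univ : Finset (Fin 5)).card ≤ (s.image c).card :=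
      Finset.card_le_card (fun k _ => hall k)
    have h2 := Finset.card_image_le (s := s) (f := c)
    simp at h1
    omega
  obtain ⟨u, w, huw, heq⟩ := hno (Function.update c v k)
  have hk' : ∀ w, G.Adj v w → c w ≠ k := fun w hw h =>
    hk (Finset.mem_image.mpr ⟨w, hs w hw, h⟩)
  by_cases hu : u = v
  · subst hu
    rw [Function.update_self, Function.update_of_ne huw.ne'] at heq
    exact hk' w huw heq.symm
  · by_cases hw : w = v
    · subst hw
      rw [Function.update_self, Function.update_of_ne hu] at heq
      exact hk' u huw.symm heq
    · rw [Function.update_of_ne hu, Function.update_of_ne hw] at heq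
      exact hc u w hu hw huw heq

lemma incomp_of_critical {V : Type*} {G : SimpleGraph V} (hcrit : IsVertexCritical 6 G) (x y : V)
    (hxy : x ≠ y) : ∃ w, G.Adj x w ∧ ¬ G.Adj y w := by
  classical
  obtain ⟨hno, hyes⟩ := colouring_of_critical hcrit
  obtain ⟨c, hc⟩ := hyes x
  by_contra! hall
  -- otherwise `x` may receive the colour of `y`
  obtain ⟨u, w, huw, heq⟩ := hno (Function.update c x (c y))
  by_cases hu : u = x
  · subst hu
    rw [Function.update_self, Function.update_of_ne huw.ne'] at heq
    exact hc y w hxy.symm huw.ne' (hall w huw) heq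
  · by_cases hw : w = x
    · subst hw
      rw [Function.update_self, Function.update_of_ne hu] at heq
      exact hc y u hxy.symm hu (hall u huw.symm) heq.symm
    · rw [Function.update_of_ne hu, Function.update_of_ne hw] at heq
      exact hc u w hu hw huw heq

lemma local_of_critical {V : Type*} [Fintype V] {G : SimpleGraph V}
    (hG : P6DiamondFree G) (hcrit : IsVertexCritical 6 G) (hclique : G.cliqueNum = 5) :
    Local G := by
  classical
  have hdia := diamond_of_inducedFree hG.2
  have hle : ∀ s : Finset V, G.IsClique s → s.card ≤ 5 := fun s hs =>
    hclique ▸ hs.card_le_cliqueNum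
  refine ⟨p6_of_inducedFree hG.1, hdia, ?_, ?_, incomp_of_critical hcrit, ?_⟩
  · intro a ha x hx i j hi hj
    by_contra hij
    -- a vertex with two neighbours in the five-clique sees all of it, and extends it to a `K₆`
    have hall : ∀ m, G.Adj x (a m) := by
      intro m
      by_cases hmi : m = i
      · exact hmi ▸ hi
      by_cases hmj : m = j
      · exact hmj ▸ hj
      exact hdia (a i) (a j) x (a m) (ha _ _ hij) hi.symm (ha _ _ (Ne.symm hmi)) hj.symm
        (ha _ _ (Ne.symm hmj)) (fun h => hx ⟨m, h.symm⟩)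
    have hinj : Function.Injective a := fun p q hpq => by
      by_contra hne
      exact (ha p q hne).ne hpq
    have hcl : G.IsClique ((insert x (Finset.univ.image a) : Finset V) : Set V) := by
      rw [Finset.coe_insert, isClique_insert]
      refine ⟨?_, ?_⟩
      · rintro u hu w hw huw
        simp only [Finset.coe_image, Finset.coe_univ, Set.image_univ, Set.mem_range] at hu hw
        obtain ⟨p, rfl⟩ := hu
        obtain ⟨q, rfl⟩ := hw
        exact ha p q (fun h => huw (h ▸ rfl))
      · intro u hu _
        simp only [Finset.coe_image, Finset.coe_univ, Set.image_univ, Set.mem_range] at hu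
        obtain ⟨p, rfl⟩ := hu
        exact hall p
    have := hle _ hcl
    rw [Finset.card_insert_of_notMem (by simpa using hx), Finset.card_image_of_injective _ hinj]
      at this
    simp at this
  · intro a ha i
    by_contra! hno
    have h5 := degree_of_critical hcrit (a i) ((Finset.univ.erase i).image a) (by
      intro w hw
      by_cases hr : w ∈ Set.range a
      · obtain ⟨m, rfl⟩ := hr
        refine Finset.mem_image.mpr ⟨m, ?_, rfl⟩
        simp only [Finset.mem_erase, Finset.mem_univ, and_true]
        rintro rfl
        exact hw.ne rfl
      · exact absurd hw.symm (hno w hr))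
    have h4 := Finset.card_image_le (s := Finset.univ.erase i) (f := a)
    simp at h4
    omega
  · intro x
    by_contra! hno
    have h5 := degree_of_critical hcrit x (Finset.univ.filter (G.Adj x)) (by simp)
    have hcl : G.IsClique ((insert x (Finset.univ.filter (G.Adj x)) : Finset V) : Set V) := by
      rw [Finset.coe_insert, isClique_insert]
      refine ⟨?_, ?_⟩
      · intro u hu w hw huw
        exact hno u w (by simpa using hu) (by simpa using hw) huw
      · intro u hu _
        simpa using hu
    have := hle _ hcl
    rw [Finset.card_insert_of_notMem (by simp)] at this
    omega

/-! ### Two five-cliques sharing a vertex -/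

/-- Two five-cliques `a` and `k` whose only common vertex is `a 0 = k 0`, with no edge between the
remaining vertices of `a` and those of `k`. -/
structure Bowtie {V : Type*} (G : SimpleGraph V) (a k : Fin 5 → V) : Prop where
  ca : ∀ i j, i ≠ j → G.Adj (a i) (a j)
  ck : ∀ i j, i ≠ j → G.Adj (k i) (k j)
  center : a 0 = k 0
  ne : ∀ i j, i ≠ 0 → j ≠ 0 → a i ≠ k j
  nadj : ∀ i j, i ≠ 0 → j ≠ 0 → ¬ G.Adj (a i) (k j)

namespace Bowtie

variable {V : Type*} {G : SimpleGraph V} {a k : Fin 5 → V}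

lemma symm (hB : Bowtie G a k) : Bowtie G k a :=
  ⟨hB.ck, hB.ca, hB.center.symm, fun i j hi hj h => hB.ne j i hj hi h.symm,
    fun i j hi hj h => hB.nadj j i hj hi h.symm⟩

lemma notMem_other (hB : Bowtie G a k) {x : V} {i : Fin 5} (hx : x ∉ Set.range a)
    (hi : i ≠ 0) (hxi : G.Adj x (a i)) : x ∉ Set.range k := by
  rintro ⟨j, rfl⟩
  by_cases hj : j = 0
  · subst hj
    exact hx ⟨0, hB.center⟩
  · exact hB.nadj i j hi hj hxi.symm

/-- If some vertex `x` sees both `a i` and `k j`, then every outside neighbour of another `a i'`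
sees `k j`. -/
lemma forced (hL : Local G) (hB : Bowtie G a k) {x y : V} {i j i' : Fin 5}
    (hx : x ∉ Set.range a) (hi : i ≠ 0) (hj : j ≠ 0) (hi' : i' ≠ 0) (hii' : i' ≠ i)
    (hxi : G.Adj x (a i)) (hxj : G.Adj x (k j)) (hy : y ∉ Set.range a) (hyi' : G.Adj y (a i')) :
    G.Adj y (k j) := by
  by_contra hyj
  have hxk := hB.notMem_other hx hi hxi
  have hyk := hB.notMem_other hy hi' hyi'
  have xa : ∀ m, m ≠ i → ¬ G.Adj x (a m) := fun m hm h => hm (hL.attach a hB.ca x hx m i h hxi)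
  have xk : ∀ m, m ≠ j → ¬ G.Adj x (k m) := fun m hm h => hm (hL.attach k hB.ck x hxk m j h hxj)
  have ya : ∀ m, m ≠ i' → ¬ G.Adj y (a m) := fun m hm h => hm (hL.attach a hB.ca y hy m i' h hyi')
  obtain ⟨j', hj'0, hj'j, hyj'⟩ : ∃ j', j' ≠ 0 ∧ j' ≠ j ∧ ¬ G.Adj y (k j') := by
    have two : ∀ j : Fin 5, ∃ m n : Fin 5, m ≠ 0 ∧ n ≠ 0 ∧ m ≠ j ∧ n ≠ j ∧ m ≠ n := by decide
    obtain ⟨m, n, hm, hn, hmj, hnj, hmn⟩ := two j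
    by_cases h : G.Adj y (k m)
    · exact ⟨n, hn, hnj, fun h' => hmn (hL.attach k hB.ck y hyk m n h h')⟩
    · exact ⟨m, hm, hmj, h⟩
  have third : ∀ i i' : Fin 5, ∃ l : Fin 5, l ≠ 0 ∧ l ≠ i ∧ l ≠ i' := by decide
  obtain ⟨l, hl0, hli, hli'⟩ := third i i'
  have sy := G.adj_comm
  have ca := hB.ca
  have ck := hB.ck
  have na := hB.nadj
  by_cases hxy : G.Adj x y
  · apply hL.p6 (k j') (k j) x y (a i') (a l) <;> grind
  · apply hL.p6 (k j') (k j) x (a i) (a i') y <;> grind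

/-- No vertex outside sees both cliques away from their common vertex. -/
lemma no_mixed (hL : Local G) (hB : Bowtie G a k) {x : V} {i : Fin 5} (hx : x ∉ Set.range a)
    (hi : i ≠ 0) (hxi : G.Adj x (a i)) (j : Fin 5) : ¬ G.Adj x (k j) := by
  intro hxj
  have hj : j ≠ 0 := by
    rintro rfl
    rw [← hB.center] at hxj
    exact hi (hL.attach a hB.ca x hx i 0 hxi hxj)
  have other : ∀ i : Fin 5, ∃ l : Fin 5, l ≠ 0 ∧ l ≠ i := by decide
  obtain ⟨i', hi'0, hi'i⟩ := other i
  obtain ⟨j', hj'0, hj'j⟩ := other j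
  have hxk := hB.notMem_other hx hi hxi
  obtain ⟨y, hy, hyi'⟩ := hL.nbr a hB.ca i'
  obtain ⟨w, hw, hwj'⟩ := hL.nbr k hB.ck j'
  have hyj := forced hL hB hx hi hj hi'0 hi'i hxi hxj hy hyi'
  have hwi := forced hL hB.symm hxk hj hi hj'0 hj'j hxj hxi hw hwj'
  have hyj' := forced hL hB (hB.symm.notMem_other hw hj'0 hwj') hi hj'0 hi'0 hi'i hwi hwj' hy hyi'
  exact hj'j (hL.attach k hB.ck y (hB.notMem_other hy hi'0 hyi') j' j hyj' hyj)

lemma anticomplete (hL : Local G) (hB : Bowtie G a k) {x u : V} {i j : Fin 5}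
    (hx : x ∉ Set.range a) (hi : i ≠ 0) (hxi : G.Adj x (a i))
    (hu : u ∉ Set.range k) (hj : j ≠ 0) (huj : G.Adj u (k j)) : ¬ G.Adj x u := by
  intro hxu
  have other : ∀ i : Fin 5, ∃ l : Fin 5, l ≠ 0 ∧ l ≠ i := by decide
  obtain ⟨i', hi'0, hi'i⟩ := other i
  obtain ⟨j', hj'0, hj'j⟩ := other j
  have xk := no_mixed hL hB hx hi hxi
  have ua := no_mixed hL hB.symm hu hj huj
  have xa : ∀ m, m ≠ i → ¬ G.Adj x (a m) := fun m hm h => hm (hL.attach a hB.ca x hx m i h hxi)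
  have uk : ∀ m, m ≠ j → ¬ G.Adj u (k m) := fun m hm h => hm (hL.attach k hB.ck u hu m j h huj)
  have sy := G.adj_comm
  have ca := hB.ca
  have ck := hB.ck
  have na := hB.nadj
  apply hL.p6 (k j') (k j) u x (a i) (a i') <;> grind

lemma false (hL : Local G) (hB : Bowtie G a k) : False := by
  obtain ⟨x, hx, hx1⟩ := hL.nbr a hB.ca 1
  obtain ⟨u, hu, hu1⟩ := hL.nbr k hB.ck 1
  have h10 : (1 : Fin 5) ≠ 0 := by decide
  have h20 : (2 : Fin 5) ≠ 0 := by decide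
  have h21 : (2 : Fin 5) ≠ 1 := by decide
  have xk := no_mixed hL hB hx h10 hx1
  have ua := no_mixed hL hB.symm hu h10 hu1
  have xa : ∀ m, m ≠ 1 → ¬ G.Adj x (a m) := fun m hm h => hm (hL.attach a hB.ca x hx m 1 h hx1)
  have uk : ∀ m, m ≠ 1 → ¬ G.Adj u (k m) := fun m hm h => hm (hL.attach k hB.ck u hu m 1 h hu1)
  have hxu := anticomplete hL hB hx h10 hx1 hu h10 hu1
  have sy := G.adj_comm
  have ca := hB.ca
  have ck := hB.ck
  have na := hB.nadj
  have hc := hB.center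
  have far : ∀ t, G.Adj x t → t ≠ a 1 → t ∉ Set.range a ∧ (∀ j, j ≠ 0 → ¬ G.Adj t (k j)) := by
    intro t hxt ht1
    refine ⟨?_, ?_⟩
    · rintro ⟨m, rfl⟩
      exact xa m (fun h => ht1 (h ▸ rfl)) hxt
    · intro j hj htj
      refine anticomplete hL hB hx h10 hx1 (u := t) ?_ hj htj hxt
      rintro ⟨m, rfl⟩
      exact xk m hxt
  have tu : ∀ t, G.Adj x t → t ≠ a 1 → ¬ G.Adj t (a 1) → ¬ G.Adj t u := by
    intro t hxt ht1 hta1 htu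
    have := (far t hxt ht1).2
    apply hL.p6 (k 2) (k 1) u t x (a 1) <;> grind
  have near : ∀ t, G.Adj x t → ¬ G.Adj t (a 0) → G.Adj t (a 1) := by
    intro t hxt ht0
    by_contra hta1
    have ht1 : t ≠ a 1 := by
      rintro rfl
      exact ht0 (ca 1 0 h10)
    have := (far t hxt ht1).2
    have := tu t hxt ht1 hta1
    apply hL.p6 u (k 1) (a 0) (a 1) x t <;> grind
  have hx0 : x ≠ a 0 := fun h => hx ⟨0, h.symm⟩
  obtain ⟨x', hxx', hx'0⟩ := hL.incomp x (a 0) hx0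
  have hx'1 := near x' hxx' (fun h => hx'0 h.symm)
  have hx'ne : x' ≠ a 1 := by
    rintro rfl
    exact hx'1.ne rfl
  have hx'k := (far x' hxx' hx'ne).2
  have hx'u := anticomplete hL hB (far x' hxx' hx'ne).1 h10 hx'1 hu h10 hu1
  have all : ∀ t, G.Adj x t → t ≠ a 1 → G.Adj t (a 1) := by
    intro t hxt ht1
    by_cases ht0 : G.Adj t (a 0)
    · by_contra hta1
      have htk := (far t hxt ht1).2
      have htu := tu t hxt ht1 hta1
      have hx't : ¬ G.Adj x' t := fun h =>
        hta1 (hL.diamond x x' t (a 1) hxx' hxt hx1 h hx'1 ht1)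
      apply hL.p6 x' x t (a 0) (k 1) u <;> grind
    · exact near t hxt ht0
  obtain ⟨p, q, hp, hq, hpq, hnpq⟩ := hL.notClique x
  have hp1 : p ≠ a 1 := by
    rintro rfl
    exact hnpq (all q hq (Ne.symm hpq)).symm
  have hq1 : q ≠ a 1 := by
    rintro rfl
    exact hnpq (all p hp hpq)
  exact hnpq (hL.diamond x (a 1) p q hx1 hp hq (all p hp hp1).symm (all q hq hq1).symm hpq)

end Bowtie

/-! ### Five-cycles in the neighbourhood of a five-clique -/

section FiveCycle

variable {V : Type*} {G : SimpleGraph V}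

/-- On a five-cycle labelled with five labels, assume that no three consecutive labels agree, and
that among any four consecutive vertices the label of the last one also occurs before. Then, up to
rotation, the labels are `i, j, i, j, i` with `i ≠ j`. -/
lemma labels_pattern : ∀ d₀ d₁ d₂ d₃ d₄ : Fin 5,
    (∀ s, ¬ (![d₀, d₁, d₂, d₃, d₄] s = ![d₀, d₁, d₂, d₃, d₄] (s + 1) ∧
      ![d₀, d₁, d₂, d₃, d₄] (s + 1) = ![d₀, d₁, d₂, d₃, d₄] (s + 2))) →
    (∀ s, ![d₀, d₁, d₂, d₃, d₄] (s + 3) = ![d₀, d₁, d₂, d₃, d₄] s ∨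
      ![d₀, d₁, d₂, d₃, d₄] (s + 3) = ![d₀, d₁, d₂, d₃, d₄] (s + 1) ∨
      ![d₀, d₁, d₂, d₃, d₄] (s + 3) = ![d₀, d₁, d₂, d₃, d₄] (s + 2)) →
    ∃ s, ![d₀, d₁, d₂, d₃, d₄] (s + 2) = ![d₀, d₁, d₂, d₃, d₄] s ∧
      ![d₀, d₁, d₂, d₃, d₄] (s + 4) = ![d₀, d₁, d₂, d₃, d₄] s ∧
      ![d₀, d₁, d₂, d₃, d₄] (s + 3) = ![d₀, d₁, d₂, d₃, d₄] (s + 1) ∧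
      ![d₀, d₁, d₂, d₃, d₄] (s + 1) ≠ ![d₀, d₁, d₂, d₃, d₄] s := by
  decide +kernel

/-- The induced five-cycle `p x w y q` with `p, q, w` attached to `a i` and `x, y` attached to
`a j`. -/
structure AttachedCycle (G : SimpleGraph V) (a : Fin 5 → V) (i j : Fin 5) (p x w y q : V) : Prop where
  px : G.Adj p x
  xw : G.Adj x w
  wy : G.Adj w y
  yq : G.Adj y q
  qp : G.Adj q p
  pw : ¬ G.Adj p w
  py : ¬ G.Adj p y
  xy : ¬ G.Adj x y
  xq : ¬ G.Adj x q
  wq : ¬ G.Adj w q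
  hp : ∀ m, G.Adj p (a m) ↔ m = i
  hx : ∀ m, G.Adj x (a m) ↔ m = j
  hw : ∀ m, G.Adj w (a m) ↔ m = i
  hy : ∀ m, G.Adj y (a m) ↔ m = j
  hq : ∀ m, G.Adj q (a m) ↔ m = i

/-- The trace on the cycle of a vertex `z` attached to a third vertex `a m`. The vertex `a n` is a
further one, used to extend paths. -/
lemma third_vertex (hL : Local G) {a : Fin 5 → V} (ca : ∀ i j, i ≠ j → G.Adj (a i) (a j))
    {i j : Fin 5} {p x w y q : V} (hC : AttachedCycle G a i j p x w y q) (hij : i ≠ j)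
    {m n : Fin 5} (hmi : m ≠ i) (hmj : m ≠ j) (hni : n ≠ i) (hnj : n ≠ j) (hmn : m ≠ n)
    {z : V} (hz : ∀ l, G.Adj z (a l) ↔ l = m) :
    (G.Adj z p ∧ G.Adj z w ∧ G.Adj z y ∧ ¬ G.Adj z x ∧ ¬ G.Adj z q) ∨
      (G.Adj z q ∧ G.Adj z w ∧ G.Adj z x ∧ ¬ G.Adj z y ∧ ¬ G.Adj z p) := by
  have sy := G.adj_comm
  obtain ⟨px, xw, wy, yq, qp, pw, py, xy, xq, wq, hp, hx, hw, hy, hq⟩ := hC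
  -- the trace contains no three consecutive vertices
  have dia : ∀ u v t, G.Adj u v → G.Adj v t → ¬ G.Adj u t → u ≠ t →
      G.Adj z u → G.Adj z v → G.Adj z t → False := by
    intro u v t huv hvt hut hne hzu hzv hzt
    exact hut (hL.diamond z v u t hzv hzu hzt huv.symm hvt hne)
  -- the trace contains no vertex preceded by two consecutive missing vertices
  have ext : ∀ u v t, G.Adj u v → G.Adj v t → ¬ G.Adj u t →
      (∀ l, G.Adj u (a l) → l = i ∨ l = j) → (∀ l, G.Adj v (a l) → l = i ∨ l = j) →
      (∀ l, G.Adj t (a l) → l = i ∨ l = j) →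
      ¬ G.Adj z u → ¬ G.Adj z v → G.Adj z t → False := by
    intro u v t huv hvt hut hu hv ht hzu hzv hzt
    apply hL.p6 u v t z (a m) (a n) <;> grind
  have hp' : ∀ l, G.Adj p (a l) → l = i ∨ l = j := fun l h => Or.inl ((hp l).1 h)
  have hx' : ∀ l, G.Adj x (a l) → l = i ∨ l = j := fun l h => Or.inr ((hx l).1 h)
  have hw' : ∀ l, G.Adj w (a l) → l = i ∨ l = j := fun l h => Or.inl ((hw l).1 h)
  have hy' : ∀ l, G.Adj y (a l) → l = i ∨ l = j := fun l h => Or.inr ((hy l).1 h)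
  have hq' : ∀ l, G.Adj q (a l) → l = i ∨ l = j := fun l h => Or.inl ((hq l).1 h)
  have e3 := ext w y q wy yq wq hw' hy' hq'
  have e4 := ext y q p yq qp (by grind) hy' hq' hp'
  have e5 := ext q p x qp px (by grind) hq' hp' hx'
  have e1 := ext p x w px xw pw hp' hx' hw'
  have e2 := ext x w y xw wy xy hx' hw' hy'
  have d1 := dia p x w px xw pw (by grind)
  have d2 := dia x w y xw wy xy (by grind)
  have d3 := dia w y q wy yq wq (by grind)
  have d4 := dia y q p yq qp (by grind) (by grind)
  have d5 := dia q p x qp px (by grind) (by grind)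
  -- the empty trace
  have f0 : ¬ G.Adj z x → ¬ G.Adj z p → ¬ G.Adj z q → False := by
    intro h1 h2 h3
    apply hL.p6 z (a m) (a j) x p q <;> grind
  -- the trace does not contain both `p` and `q`
  have f1 : G.Adj z p → G.Adj z q → False := by
    intro h1 h2
    have : z ≠ a i := by
      rintro rfl
      exact hmn ((hz n).1 (ca i n (Ne.symm hni))).symm
    have := hL.diamond p q z (a i) (by grind) (by grind) (by grind) (by grind) (by grind) this
    grind
  -- the traces `{p, x, y}` and `{q, y, x}`
  have f2 : G.Adj z x → G.Adj z y → ¬ G.Adj z q → False := by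
    intro h1 h2 h3
    apply hL.p6 (a n) (a i) q y z x <;> grind
  have f3 : G.Adj z x → G.Adj z y → ¬ G.Adj z p → False := by
    intro h1 h2 h3
    apply hL.p6 (a n) (a i) p x z y <;> grind
  grind

lemma cycle_false (hL : Local G) {a : Fin 5 → V} (ca : ∀ i j, i ≠ j → G.Adj (a i) (a j))
    {i j : Fin 5} {p x w y q : V} (hC : AttachedCycle G a i j p x w y q) (hij : i ≠ j) : False := by
  have others : ∀ i j : Fin 5, ∃ m n r : Fin 5,
      m ≠ i ∧ m ≠ j ∧ n ≠ i ∧ n ≠ j ∧ r ≠ i ∧ r ≠ j ∧ m ≠ n ∧ m ≠ r ∧ n ≠ r := by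
    decide +kernel
  obtain ⟨m, n, r, hmi, hmj, hni, hnj, hri, hrj, hmn, hmr, hnr⟩ := others i j
  obtain ⟨z, hz, hzm⟩ := hL.nbr a ca m
  obtain ⟨z', hz', hzn⟩ := hL.nbr a ca n
  have zm : ∀ l, G.Adj z (a l) ↔ l = m :=
    fun l => ⟨fun h => hL.attach a ca z hz l m h hzm, fun h => h ▸ hzm⟩
  have zn : ∀ l, G.Adj z' (a l) ↔ l = n :=
    fun l => ⟨fun h => hL.attach a ca z' hz' l n h hzn, fun h => h ▸ hzn⟩
  have h1 := third_vertex hL ca hC hij hmi hmj hni hnj hmn zm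
  have h2 := third_vertex hL ca hC hij hni hnj hmi hmj (Ne.symm hmn) zn
  have hzz : z ≠ z' := by
    rintro rfl
    exact hmn ((zn m).1 ((zm m).2 rfl))
  have sy := G.adj_comm
  obtain ⟨px, xw, wy, yq, qp, pw, py, xy, xq, wq, hp, hx, hw, hy, hq⟩ := hC
  -- equal traces `{e, w, f}` with `w` adjacent to `f`
  have same : ∀ e f, ¬ G.Adj e w → G.Adj w f → e ≠ w →
      G.Adj z e → G.Adj z w → G.Adj z f → G.Adj z' e → G.Adj z' w → G.Adj z' f → False := by
    intro e f hew hwf hne h1 h2 h3 h4 h5 h6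
    have hadj := hL.diamond w f z z' hwf h2.symm h5.symm h3.symm h6.symm hzz
    exact hew (hL.diamond z z' e w hadj h1 h2 h4 h5 hne)
  have hpw : p ≠ w := by grind
  have hqw : q ≠ w := by grind
  rcases h1 with ⟨zp, zw, zy, zx, zq⟩ | ⟨zq, zw, zx, zy, zp⟩ <;>
    rcases h2 with ⟨zp', zw', zy', zx', zq'⟩ | ⟨zq', zw', zx', zy', zp'⟩
  · exact same p y pw wy hpw zp zw zy zp' zw' zy'
  · have hn : ¬ G.Adj z z' := by
      intro h
      have := hL.diamond z w y z' zw zy h wy zw'.symm (by grind)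
      grind
    apply hL.p6 (a r) (a n) z' q p z <;> grind
  · have hn : ¬ G.Adj z z' := by
      intro h
      have := hL.diamond z' w y z zw' zy' h.symm wy zw.symm (by grind)
      grind
    apply hL.p6 (a r) (a n) z' p q z <;> grind
  · exact same q x (by grind) xw.symm hqw zq zw zx zq' zw' zx'

end FiveCycle

/-- Let `G` be a 6-vertex-critical (P₆, diamond)-free graph with clique number 5,
let `A = {a₁, …, a₅}` be a clique of size 5 in `G`, and `B_i` the set of vertices
outside `A` adjacent to `a_i`. Then each `B_i` induces a `K₄`-free subgraph, and
`B₁ ∪ ⋯ ∪ B₅` induces a subgraph with no induced five-cycle. -/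
theorem six_critical_B_K4free_noC5 {V : Type*} [Fintype V] (G : SimpleGraph V)
    (hG : P6DiamondFree G) (hcrit : IsVertexCritical 6 G)
    (hclique : G.cliqueNum = 5) (a : Fin 5 → V) (hainj : Function.Injective a)
    (haclique : ∀ i j, i ≠ j → G.Adj (a i) (a j)) :
    (∀ i : Fin 5, (G.induce (Bset G a i)).CliqueFree 4) ∧
      InducedFree C5graph (G.induce (⋃ j, Bset G a j)) := by
  have hL := local_of_critical hG hcrit hclique
  refine ⟨?_, ?_⟩
  · intro i
    by_contra hn
    obtain ⟨f⟩ := not_cliqueFree_iff_top_isContained 4 |>.mp hn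
    have hf : ∀ s t, s ≠ t → G.Adj (f s : V) (f t) := fun s t hst => by
      have : (G.induce (Bset G a i)).Adj (f s) (f t) := f.toHom.map_adj hst
      simpa using this
    have hmem : ∀ s, (f s : V) ∉ Set.range a ∧ G.Adj (f s) (a i) := fun s => (f s).2
    -- relabel `A` so that the common vertex gets index `0`
    refine Bowtie.false (a := a ∘ Equiv.swap 0 i) (k := Fin.cons (a i) (fun s => (f s : V))) hL
      ⟨?_, ?_, ?_, ?_, ?_⟩
    · intro s t hst
      exact haclique _ _ (fun h => hst ((Equiv.swap 0 i).injective h))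
    · intro s t hst
      induction s using Fin.cases with
      | zero =>
        induction t using Fin.cases with
        | zero => exact absurd rfl hst
        | succ t => simpa using (hmem t).2.symm
      | succ s =>
        induction t using Fin.cases with
        | zero => simpa using (hmem s).2
        | succ t => simpa using hf s t (fun h => hst (h ▸ rfl))
    · simp
    · intro s t _ ht h
      obtain ⟨t, rfl⟩ := Fin.exists_succ_eq.mpr ht
      exact (hmem t).1 ⟨Equiv.swap 0 i s, by simpa using h⟩
    · intro s t hs ht h
      obtain ⟨t, rfl⟩ := Fin.exists_succ_eq.mpr ht
      have h' : G.Adj (f t : V) (a (Equiv.swap 0 i s)) := by simpa using h.symm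
      have := hL.attach a haclique _ (hmem t).1 _ _ h' (hmem t).2
      exact hs ((Equiv.swap 0 i).injective (by simpa using this))
  · rintro ⟨f⟩
    have hmem : ∀ s, ∃ d : Fin 5, (f s : V) ∉ Set.range a ∧ G.Adj (f s) (a d) := fun s => by
      simpa [Bset] using (f s).2
    choose d hda hd using hmem
    have had : ∀ s m, G.Adj (f s : V) (a m) ↔ m = d s := fun s m =>
      ⟨fun h => hL.attach a haclique _ (hda s) _ _ h (hd s), fun h => h ▸ hd s⟩
    have hf : ∀ s t, G.Adj (f s : V) (f t) ↔ C5graph.Adj s t := fun s t => by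
      rw [← f.map_rel_iff]
      simp
    have hc : ∀ s t, C5graph.Adj s t ↔ (t = s + 1 ∨ s = t + 1) := by
      unfold C5graph
      simp only [fromRel_adj]
      decide
    have hv : ![d 0, d 1, d 2, d 3, d 4] = d := by
      ext s
      fin_cases s <;> rfl
    have hpat := labels_pattern (d 0) (d 1) (d 2) (d 3) (d 4)
    rw [hv] at hpat
    have e1 : ∀ s : Fin 5, C5graph.Adj s (s + 1) := by simp only [hc]; decide
    have e2 : ∀ s : Fin 5, C5graph.Adj (s + 1) (s + 2) := by simp only [hc]; decide
    have e3 : ∀ s : Fin 5, C5graph.Adj (s + 2) (s + 3) := by simp only [hc]; decide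
    have e4 : ∀ s : Fin 5, C5graph.Adj (s + 3) (s + 4) := by simp only [hc]; decide
    have e5 : ∀ s : Fin 5, C5graph.Adj (s + 4) s := by simp only [hc]; decide
    have n1 : ∀ s : Fin 5, ¬ C5graph.Adj s (s + 2) := by simp only [hc]; decide
    have n2 : ∀ s : Fin 5, ¬ C5graph.Adj s (s + 3) := by simp only [hc]; decide
    have n3 : ∀ s : Fin 5, ¬ C5graph.Adj (s + 1) (s + 3) := by simp only [hc]; decide
    have n4 : ∀ s : Fin 5, ¬ C5graph.Adj (s + 1) (s + 4) := by simp only [hc]; decide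
    have n5 : ∀ s : Fin 5, ¬ C5graph.Adj (s + 2) (s + 4) := by simp only [hc]; decide
    simp only [← hf] at e1 e2 e3 e4 e5 n1 n2 n3 n4 n5
    obtain ⟨s, h2, h4, h3, h1⟩ := hpat (by
      rintro s ⟨h01, h12⟩
      have hne : (f s : V) ≠ f (s + 2) := fun h => n2 s (h ▸ e3 s)
      exact n1 s (hL.diamond (f (s + 1)) (a (d s)) _ _ ((had _ _).2 h01) (e1 s).symm (e2 s)
        ((had _ _).2 rfl).symm ((had _ _).2 (h01.trans h12)).symm hne)) (by
      intro s
      by_contra! hno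
      obtain ⟨h30, h31, h32⟩ := hno
      -- a vertex of `A` seeing none of the four path vertices
      obtain ⟨m, m0, m1, m2, m3⟩ : ∃ m, m ≠ d s ∧ m ≠ d (s + 1) ∧ m ≠ d (s + 2) ∧ m ≠ d (s + 3) := by
        generalize d s = i₀
        generalize d (s + 1) = i₁
        generalize d (s + 2) = i₂
        generalize d (s + 3) = i₃
        revert i₀ i₁ i₂ i₃
        decide +kernel
      exact hL.p6 (f s) (f (s + 1)) (f (s + 2)) (f (s + 3)) (a (d (s + 3))) (a m)
        (e1 s) (e2 s) (e3 s) ((had _ _).2 rfl) (haclique _ _ (Ne.symm m3)) (n1 s) (n2 s)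
        (fun h => h30 ((had _ _).1 h)) (fun h => m0 ((had _ _).1 h)) (n3 s)
        (fun h => h31 ((had _ _).1 h)) (fun h => m1 ((had _ _).1 h))
        (fun h => h32 ((had _ _).1 h)) (fun h => m2 ((had _ _).1 h))
        (fun h => m3 ((had _ _).1 h)))
    refine cycle_false hL haclique (i := d s) (j := d (s + 1)) (p := f s) (x := f (s + 1))
      (w := f (s + 2)) (y := f (s + 3)) (q := f (s + 4)) ?_ (Ne.symm h1)
    exact ⟨e1 s, e2 s, e3 s, e4 s, e5 s, n1 s, n2 s, n3 s, n4 s, n5 s, had s, had (s + 1),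
      fun m => h2 ▸ had (s + 2) m, fun m => h3 ▸ had (s + 3) m, fun m => h4 ▸ had (s + 4) m⟩
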